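/- arXiv:2203.12492 — 4 statements merged into one kernel-verified Lean document; each statement's English description precedes it below -/
import Mathlib

section
/- For all integers d ≥ 1 and r ≥ 0, the labeling f : D(Z(d,r)) → Φ⁺ is injective and its image is exactly the inversion set Inv(w^{(d,r)}) of the signed permutation w^{(d,r)} ∈ W(B_{d+r}). -/
open scoped BigOperators

namespace BST

/-- `lam` (1-indexed, with `d` parts) is a strict partition: strictly decreasing
positive parts `lam 1 > lam 2 > ⋯ > lam d > 0`. -/
def IsStrictPartition (d : ℕ) (lam : ℕ → ℕ) : Prop :=
  (∀ i : ℕ, 1 ≤ i → i < d → lam (i + 1) < lam i) ∧ 1 ≤ lam d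

/-- The size `|λ| = λ_1 + ⋯ + λ_d`. -/
def sizeP (d : ℕ) (lam : ℕ → ℕ) : ℕ := ∑ i ∈ Finset.Icc 1 d, lam i

/-- The shifted diagram `D(λ) ⊆ ℤ × ℤ`: row `i` (1 ≤ i ≤ d) occupies columns
`i - d, …, λ_i + i - d - 1`. -/
def Diagram (d : ℕ) (lam : ℕ → ℕ) : Set (ℤ × ℤ) :=
  {p : ℤ × ℤ | 1 ≤ p.1 ∧ p.1 ≤ (d : ℤ) ∧ p.1 - (d : ℤ) ≤ p.2 ∧
    p.2 + (d : ℤ) + 1 ≤ (lam p.1.toNat : ℤ) + p.1}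

/-- The hook `H(i,c)`. -/
def Hook (d : ℕ) (lam : ℕ → ℕ) (i c : ℤ) : Set (ℤ × ℤ) :=
  {(i, c)} ∪ {p ∈ Diagram d lam | (p.1 = i ∧ c < p.2) ∨ (p.2 = c ∧ i < p.1)} ∪
    {p ∈ Diagram d lam | c < 0 ∧ p.1 = (d : ℤ) + 1 + c}

/-- The extended hook `H̃(i,c)`. -/
def ExtHook (d : ℕ) (lam : ℕ → ℕ) (i c : ℤ) : Set (ℤ × ℤ) :=
  Hook d lam i c ∪ {p : ℤ × ℤ | c < 0 ∧ p = ((d : ℤ) + 1 + c, c)}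

/-- The extended diagram `D(λ) ∪ {(i, i - d - 1) : 1 ≤ i ≤ d}`. -/
def ExtDiagram (d : ℕ) (lam : ℕ → ℕ) : Set (ℤ × ℤ) :=
  Diagram d lam ∪ {p : ℤ × ℤ | 1 ≤ p.1 ∧ p.1 ≤ (d : ℤ) ∧ p.2 = p.1 - ((d : ℤ) + 1)}

/-- The extended filling `B̃`, with `B̃(i, i - d - 1) = B(i, 0)`. -/
def ExtFilling (d : ℕ) (B : ℤ × ℤ → ℕ) : ℤ × ℤ → ℕ :=
  fun p => if p.2 = p.1 - ((d : ℤ) + 1) then B (p.1, 0) else B p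

/-- The rank function `rk(i,c)`. -/
def rk (d : ℕ) (lam : ℕ → ℕ) (i c : ℤ) : ℤ :=
  if 0 ≤ c then (lam i.toNat : ℤ) - d + i - c
  else (lam i.toNat : ℤ) - d + i + (lam ((d : ℤ) + 1 + c).toNat : ℤ) + c + 1

/-- A bijective filling of `D(λ)` with `1, …, |λ|` (normalized to be `0` off the diagram). -/
def IsFilling (d : ℕ) (lam : ℕ → ℕ) (B : ℤ × ℤ → ℕ) : Prop :=
  Set.BijOn B (Diagram d lam) (Set.Icc 1 (sizeP d lam)) ∧
    ∀ p : ℤ × ℤ, p ∉ Diagram d lam → B p = 0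

/-- A balanced shifted tableau: a bijective filling such that at each box `(i,c)`,
`B(i,c)` is the `rk(i,c)`-th largest entry of the multiset of values of `B̃` on the
extended hook, i.e. exactly `rk(i,c) - 1` boxes of the extended hook carry a value
strictly larger than `B(i,c)`. -/
def IsBalanced (d : ℕ) (lam : ℕ → ℕ) (B : ℤ × ℤ → ℕ) : Prop :=
  IsFilling d lam B ∧ ∀ p ∈ Diagram d lam,
    ({q ∈ ExtHook d lam p.1 p.2 | B p < ExtFilling d B q}.ncard : ℤ) =
      rk d lam p.1 p.2 - 1

/-- A standard Young tableau of shifted shape `λ`. -/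
def IsSYT (d : ℕ) (lam : ℕ → ℕ) (B : ℤ × ℤ → ℕ) : Prop :=
  IsFilling d lam B ∧ ∀ p ∈ Diagram d lam, ∀ q ∈ Diagram d lam,
    ((p.1 = q.1 ∧ p.2 < q.2) → B p < B q) ∧ ((p.2 = q.2 ∧ p.1 < q.1) → B p < B q)

/-- The simple reflections of `W(B_n)`, acting on `ℤ`: `s 0` swaps `1 ↔ -1`,
and `s a` (for `a ≥ 1`) swaps `a ↔ a+1` and `-a ↔ -(a+1)`. -/
def sB (a : ℕ) : Equiv.Perm ℤ :=
  if a = 0 then Equiv.swap 1 (-1)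
  else Equiv.swap (a : ℤ) ((a : ℤ) + 1) * Equiv.swap (-(a : ℤ)) (-(a : ℤ) - 1)

/-- The product `s_{a_1} s_{a_2} ⋯ s_{a_m}` of a word. -/
def wordProd (L : List ℕ) : Equiv.Perm ℤ := (L.map sB).prod

/-- A signed permutation in `W(B_n)`: odd, and the identity beyond `n`. -/
def IsSignedPerm (n : ℕ) (w : Equiv.Perm ℤ) : Prop :=
  (∀ i : ℤ, w (-i) = -(w i)) ∧ ∀ i : ℤ, (n : ℤ) < |i| → w i = i

/-- The Coxeter length of `w` in `W(B_n)`. -/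
noncomputable def lengthB (n : ℕ) (w : Equiv.Perm ℤ) : ℕ :=
  sInf {m : ℕ | ∃ L : List ℕ, (∀ a ∈ L, a < n) ∧ wordProd L = w ∧ L.length = m}

/-- `L` is a reduced word of `w` in `W(B_n)`. -/
def IsReducedWord (n : ℕ) (w : Equiv.Perm ℤ) (L : List ℕ) : Prop :=
  (∀ a ∈ L, a < n) ∧ wordProd L = w ∧ L.length = lengthB n w

/-- The vector `e_k` (for `k ≥ 1` the `k`-th standard basis vector, with the
conventions `e 0 = 0` and `e (-k) = - e k`), represented as an odd function `ℤ → ℤ`. -/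
def eVec (k : ℤ) : ℤ → ℤ :=
  fun t => if t = 0 then 0 else if t = k then 1 else if t = -k then -1 else 0

/-- The positive roots of type `B_n`. -/
def PosRoots (n : ℕ) : Set (ℤ → ℤ) :=
  {v | (∃ i j : ℤ, 1 ≤ i ∧ i < j ∧ j ≤ (n : ℤ) ∧
        (v = eVec j - eVec i ∨ v = eVec j + eVec i)) ∨
       (∃ i : ℤ, 1 ≤ i ∧ i ≤ (n : ℤ) ∧ v = eVec i)}

/-- The action of a signed permutation on vectors: `w · e_i = e_{w(i)}`. -/
def actB (w : Equiv.Perm ℤ) (v : ℤ → ℤ) : ℤ → ℤ := fun t => v (w⁻¹ t)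

/-- The inversion set `Inv(w) = {α ∈ Φ⁺ : w⁻¹ · α ∈ -Φ⁺}`. -/
def InvSet (n : ℕ) (w : Equiv.Perm ℤ) : Set (ℤ → ℤ) :=
  {α | α ∈ PosRoots n ∧ -(actB w⁻¹ α) ∈ PosRoots n}

/-- The simple roots: `α_0 = e_1` and `α_a = e_{a+1} - e_a` for `a ≥ 1`. -/
def alphaRoot (a : ℕ) : ℤ → ℤ :=
  if a = 0 then eVec 1 else eVec ((a : ℤ) + 1) - eVec (a : ℤ)

/-- The reflection order of a word: `reflOrder L t = γ_{t+1} = s_{a_1} ⋯ s_{a_t} · α_{a_{t+1}}`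
(0-indexed). -/
def reflOrder (L : List ℕ) (t : ℕ) : ℤ → ℤ :=
  actB (wordProd (L.take t)) (alphaRoot (L.getD t 0))

/-- The trapezoid `Z(d,r) = (r+2d-1, r+2d-3, …, r+1)`. -/
def Zlam (d r : ℕ) : ℕ → ℕ := fun i => r + 2 * d + 1 - 2 * i

/-- The labeling `f : D(Z(d,r)) → Φ⁺`. -/
def fLabel (d r : ℕ) (p : ℤ × ℤ) : ℤ → ℤ :=
  if p.2 ≤ 0 then eVec ((d : ℤ) + 1 - p.1) - eVec p.2
  else if p.2 ≤ (r : ℤ) then eVec ((d : ℤ) + 1 - p.1) + eVec (p.2 + (d : ℤ))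
  else eVec ((d : ℤ) + 1 - p.1) - eVec (p.2 - (r : ℤ))

/-- The extended labeling `f̃`, with `f̃(i, i - d - 1) = 2 e_{d+1-i}`. -/
def fExtLabel (d r : ℕ) (p : ℤ × ℤ) : ℤ → ℤ :=
  if p.2 = p.1 - ((d : ℤ) + 1) then (2 : ℤ) • eVec ((d : ℤ) + 1 - p.1)
  else fLabel d r p

/-- `w` is the signed permutation `w^{(d,r)} ∈ W(B_{d+r})`, i.e.
`w(i) = d + i` for `1 ≤ i ≤ r` and `w(i) = -(i - r)` for `r < i ≤ d + r`. -/
def IsWdr (d r : ℕ) (w : Equiv.Perm ℤ) : Prop :=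
  IsSignedPerm (d + r) w ∧
    (∀ i : ℤ, 1 ≤ i → i ≤ (r : ℤ) → w i = (d : ℤ) + i) ∧
    (∀ i : ℤ, (r : ℤ) < i → i ≤ (d : ℤ) + (r : ℤ) → w i = -(i - r))


/-- `x` lies strictly between `y` and `z` (i.e. `min(y,z) < x < max(y,z)`). -/
def Between (x y z : ℕ) : Prop := (y < x ∧ x < z) ∨ (z < x ∧ x < y)

/-- A nonempty list is unimodal: strictly decreasing down to its minimum
(at 0-indexed position `k`), then strictly increasing. -/
def Unimodal (L : List ℕ) : Prop :=
  ∃ k : ℕ, k < L.length ∧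
    (∀ a b : ℕ, a < b → b ≤ k → L.getD b 0 < L.getD a 0) ∧
    (∀ a b : ℕ, k ≤ a → a < b → b < L.length → L.getD a 0 < L.getD b 0)

/-- Row `i` of the distinguished tableau of shape `Z(d,r)`:
`(r+d-i, …, r+1, 0, 1, …, r+d-i)`. -/
def rowWord (d r i : ℕ) : List ℕ :=
  (List.range (r + 2 * (d - i) + 1)).map fun t =>
    if t < d - i then r + (d - i) - t else t - (d - i)

/-- The reading word `π(T) = T_d T_{d-1} ⋯ T_1` of the distinguished tableau of
shape `Z(d,r)`. -/
def piWord (d r : ℕ) : List ℕ :=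
  (List.range d).flatMap fun k => rowWord d r (d - k)

/-- `μ_i = Z(d,r)_i - λ_i`. -/
def muF (d r : ℕ) (lam : ℕ → ℕ) (i : ℕ) : ℕ := r + 2 * d + 1 - 2 * i - lam i

/-- `σ_i = μ_1 + ⋯ + μ_i`. -/
def sigmaF (d r : ℕ) (lam : ℕ → ℕ) (i : ℕ) : ℕ := ∑ t ∈ Finset.Icc 1 i, muF d r lam t

/-- `ν_i = min{μ_i, …, μ_d}`. -/
noncomputable def nuF (d r : ℕ) (lam : ℕ → ℕ) (i : ℕ) : ℕ :=
  sInf {m : ℕ | ∃ j : ℕ, i ≤ j ∧ j ≤ d ∧ m = muF d r lam j}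

/-- The word `a^λ`: the concatenation over `i = 1, …, d` of the increasing runs
`(d+r-i-μ_i+1, …, d+r-i)`. -/
def aLamWord (d r : ℕ) (lam : ℕ → ℕ) : List ℕ :=
  (List.range d).flatMap fun k =>
    (List.range (muF d r lam (k + 1))).map fun t =>
      d + r - (k + 1) - muF d r lam (k + 1) + 1 + t

/-- Row `i` of the tableau `P(w^λ)`: entries `P(i,c) = c` for `c ≥ 0` and
`P(i,c) = r - c - ν_{d+1+c}` for `c < 0`. -/
noncomputable def rowWordP (d r : ℕ) (lam : ℕ → ℕ) (i : ℕ) : List ℕ :=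
  (List.range (lam i)).map fun t =>
    if t < d - i then r + (d - i) - t - nuF d r lam (i + 1 + t) else t - (d - i)

/-- The reading word `π(P(w^λ))`. -/
noncomputable def piWordP (d r : ℕ) (lam : ℕ → ℕ) : List ℕ :=
  (List.range d).flatMap fun k => rowWordP d r lam (d - k)

/-- The shape obtained from `λ` by adding one box at the end of row `i`. -/
def stepShape (lam : ℕ → ℕ) (i : ℕ) : ℕ → ℕ :=
  fun t => if t = i then lam i + 1 else lam t

/-- The box-adding map `f_i` on fillings: swap columns `j = λ_i + i - d` and `j + 1`
(in rows `1, …, i-1`), and put the value `N + 1` in the new box `(i, j)`. -/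
def addBox (d : ℕ) (lam : ℕ → ℕ) (i : ℕ) (N : ℕ) (B : ℤ × ℤ → ℕ) : ℤ × ℤ → ℕ :=
  fun p =>
    if p = ((i : ℤ), (lam i : ℤ) + (i : ℤ) - (d : ℤ)) then N + 1
    else if 1 ≤ p.1 ∧ p.1 < (i : ℤ) ∧ p.2 = (lam i : ℤ) + (i : ℤ) - (d : ℤ) then
      B (p.1, p.2 + 1)
    else if 1 ≤ p.1 ∧ p.1 < (i : ℤ) ∧ p.2 = (lam i : ℤ) + (i : ℤ) - (d : ℤ) + 1 then
      B (p.1, p.2 - 1)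
    else B p

/-- Successively apply the box-adding maps along a list of row indices,
tracking the current shape. -/
def FmapAux (d : ℕ) : List ℕ → (ℕ → ℕ) → (ℤ × ℤ → ℕ) → (ℤ × ℤ → ℕ)
  | [], _, B => B
  | i :: rest, lam, B => FmapAux d rest (stepShape lam i) (addBox d lam i (sizeP d lam) B)

/-- The shape after successively adding boxes along a list of row indices. -/
def shapeAux : List ℕ → (ℕ → ℕ) → (ℕ → ℕ)
  | [], lam => lam
  | i :: rest, lam => shapeAux rest (stepShape lam i)

/-- The list of row indices `1^{μ_1} 2^{μ_2} ⋯ d^{μ_d}` used to pad `λ` to `Z(d,r)`. -/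
def rowsList (d r : ℕ) (lam : ℕ → ℕ) : List ℕ :=
  (List.range d).flatMap fun k => List.replicate (muF d r lam (k + 1)) (k + 1)

/-- `BS(Z(d,r))|_λ`: balanced tableaux of shape `Z(d,r)` such that for each
`i ∈ {1,…,d}` the entries `N + σ_{i-1} + 1, …, N + σ_i` all occur in row `i`. -/
def BSRestricted (d r : ℕ) (lam : ℕ → ℕ) : Set (ℤ × ℤ → ℕ) :=
  {T | IsBalanced d (Zlam d r) T ∧ ∀ i : ℕ, 1 ≤ i → i ≤ d →
    ∀ k : ℕ, sizeP d lam + sigmaF d r lam (i - 1) + 1 ≤ k →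
      k ≤ sizeP d lam + sigmaF d r lam i →
      ∃ c : ℤ, ((i : ℤ), c) ∈ Diagram d (Zlam d r) ∧ T ((i : ℤ), c) = k}

/-- `w ∈ W(B_n)` pattern embeds the signed pattern `v` (given as its one-line
notation, a list of nonzero integers). -/
def PatternEmbeds (n : ℕ) (w : Equiv.Perm ℤ) (v : List ℤ) : Prop :=
  ∃ idx : Fin v.length → ℤ, StrictMono idx ∧
    (∀ j, 1 ≤ idx j ∧ idx j ≤ (n : ℤ)) ∧
    (∀ j, 0 < w (idx j) ↔ 0 < v.get j) ∧
    (∀ j k, |w (idx j)| < |w (idx k)| ↔ |v.get j| < |v.get k|)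


/-!
With the conventions `e_0 = 0` and `e_{-k} = -e_k`, the positive roots of type `B_n` are the sums
`e_a + e_b` with `|b| < a ≤ n`, and every label is such a sum up to order.  The height of
`e_a + e_b` is `a + b`, so `e_a + e_b` with `0 < a + b` is an inversion of `w` exactly when
`w⁻¹(a) + w⁻¹(b) < 0`.  As `w⁻¹` of `w^{(d,r)}` sends `1, …, d` to `-(r+1), …, -(r+d)` and
`d+1, …, d+r` to `1, …, r`, this happens for `|b| < a` exactly when `a ≤ d` or `1 ≤ b ≤ d`.
-/

theorem eVec_zero : eVec 0 = 0 := by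
  funext t
  simp only [eVec, Pi.zero_apply]
  split_ifs <;> omega

theorem eVec_neg (k : ℤ) : eVec (-k) = -eVec k := by
  funext t
  simp only [eVec, Pi.neg_apply]
  split_ifs <;> omega

theorem eVec_apply_pos_iff {k t : ℤ} : 0 < eVec k t ↔ t = k ∧ t ≠ 0 := by
  simp only [eVec]
  split_ifs <;> omega

theorem eVec_apply_nonneg {k t : ℤ} (h : k + t ≠ 0) : 0 ≤ eVec k t := by
  simp only [eVec]
  split_ifs <;> omega

theorem eVec_injective : Function.Injective eVec := by
  have eq_of_ne_zero {k l : ℤ} (hk : k ≠ 0) (h : eVec k = eVec l) : k = l :=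
    (eVec_apply_pos_iff.mp (h ▸ eVec_apply_pos_iff.mpr ⟨rfl, hk⟩ : 0 < eVec l k)).1
  intro k l h
  by_cases hk : k = 0
  · by_contra hkl
    exact hkl (eq_of_ne_zero (by omega) h.symm).symm
  · exact eq_of_ne_zero hk h

/-- The vector `e_a + e_b` attached to the pair `(a, b)`. Since `e_0 = 0` and `e_{-k} = -e_k`,
every root of type `B_n` is of this form. -/
def pairRoot (p : ℤ × ℤ) : ℤ → ℤ := eVec p.1 + eVec p.2

theorem pairRoot_swap (p : ℤ × ℤ) : pairRoot p.swap = pairRoot p :=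
  add_comm _ _

theorem neg_pairRoot (p : ℤ × ℤ) : -pairRoot p = pairRoot (-p) := by
  simp only [pairRoot, Prod.fst_neg, Prod.snd_neg, eVec_neg, neg_add]

theorem eq_or_eq_swap_of_pairRoot_eq {p q : ℤ × ℤ} (hp : p.1 + p.2 ≠ 0)
    (h : pairRoot p = pairRoot q) : p = q ∨ p = q.swap := by
  wlog hne : p.1 ≠ 0 generalizing p
  · have hp' : p.swap.1 ≠ 0 := by simp only [Prod.fst_swap]; omega
    have := this (p := p.swap) (by rwa [add_comm]) (by rwa [pairRoot_swap]) hp'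
    rwa [Prod.swap_eq_iff_eq_swap, Prod.swap_inj, or_comm] at this
  -- The two terms of `pairRoot p` cannot cancel, so its coordinate at `p.1` is positive.
  have hpos : 0 < pairRoot q p.1 :=
    h ▸ add_pos_of_pos_of_nonneg (eVec_apply_pos_iff.mpr ⟨rfl, hne⟩)
      (eVec_apply_nonneg (by rwa [add_comm]))
  have hpos_or : 0 < eVec q.1 p.1 ∨ 0 < eVec q.2 p.1 := by
    simp only [pairRoot, Pi.add_apply] at hpos
    omega
  have hmem : p.1 = q.1 ∨ p.1 = q.2 :=
    hpos_or.imp (fun hq ↦ (eVec_apply_pos_iff.mp hq).1) fun hq ↦ (eVec_apply_pos_iff.mp hq).1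
  rcases hmem with hq | hq
  · refine .inl (Prod.ext hq (eVec_injective ?_))
    rwa [pairRoot, pairRoot, hq, add_right_inj] at h
  · refine .inr (Prod.ext hq (eVec_injective ?_))
    rwa [← pairRoot_swap q, pairRoot, pairRoot, hq, Prod.fst_swap, add_right_inj] at h

/-- The height of a vector of `ℝⁿ`: the linear form with value `1` on each of the simple roots
`e_1, e_2 - e_1, …, e_n - e_{n-1}`, given by pairing with `e_1 + 2 e_2 + ⋯ + n e_n`. -/
noncomputable def height (n : ℕ) : (ℤ → ℤ) →ₗ[ℤ] ℤ :=
  ∑ t ∈ Finset.Icc (1 : ℤ) n, t • LinearMap.proj t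

theorem height_eVec {n : ℕ} {k : ℤ} (hk : |k| ≤ n) : height n (eVec k) = k := by
  have of_pos {k : ℤ} (hk0 : 0 < k) (hkn : k ≤ n) : height n (eVec k) = k := by
    simp only [height, LinearMap.sum_apply, LinearMap.smul_apply, LinearMap.proj_apply, smul_eq_mul]
    rw [Finset.sum_eq_single_of_mem k (by simp only [Finset.mem_Icc]; omega)]
    · simp only [eVec, if_neg hk0.ne', if_true, mul_one]
    · intro t ht hne
      simp only [Finset.mem_Icc] at ht
      rw [eVec, if_neg (by omega), if_neg hne, if_neg (by omega), mul_zero]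
  rw [abs_le] at hk
  rcases lt_trichotomy k 0 with h | rfl | h
  · rw [← neg_neg k, eVec_neg, map_neg, of_pos (by omega) (by omega)]
  · rw [eVec_zero, map_zero]
  · exact of_pos h hk.2

theorem height_pairRoot {n : ℕ} {p : ℤ × ℤ} (h₁ : |p.1| ≤ n) (h₂ : |p.2| ≤ n) :
    height n (pairRoot p) = p.1 + p.2 := by
  rw [pairRoot, map_add, height_eVec h₁, height_eVec h₂]

theorem mem_posRoots_iff {n : ℕ} {v : ℤ → ℤ} :
    v ∈ PosRoots n ↔ ∃ a b : ℤ, |b| < a ∧ a ≤ n ∧ v = pairRoot (a, b) := by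
  constructor
  · rintro (⟨i, j, hi, hij, hj, rfl | rfl⟩ | ⟨i, hi, hin, rfl⟩)
    · exact ⟨j, -i, abs_lt.mpr (by omega), hj, by rw [pairRoot, eVec_neg, sub_eq_add_neg]⟩
    · exact ⟨j, i, abs_lt.mpr (by omega), hj, rfl⟩
    · exact ⟨i, 0, abs_lt.mpr (by omega), hin, by rw [pairRoot, eVec_zero, add_zero]⟩
  · rintro ⟨a, b, hba, han, rfl⟩
    rw [abs_lt] at hba
    rcases lt_trichotomy b 0 with hb | rfl | hb
    · refine .inl ⟨-b, a, by omega, by omega, han, .inl ?_⟩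
      rw [pairRoot, eVec_neg, sub_neg_eq_add]
    · exact .inr ⟨a, hba.2, han, by rw [pairRoot, eVec_zero, add_zero]⟩
    · exact .inl ⟨b, a, hb, hba.2, han, .inr rfl⟩

theorem height_pos_of_mem_posRoots {n : ℕ} {v : ℤ → ℤ} (hv : v ∈ PosRoots n) :
    0 < height n v := by
  obtain ⟨a, b, hba, han, rfl⟩ := mem_posRoots_iff.mp hv
  have ha : |a| ≤ n := by rwa [abs_of_pos ((abs_nonneg b).trans_lt hba)]
  rw [height_pairRoot ha (hba.le.trans han)]
  exact neg_lt_iff_pos_add'.mp (neg_lt_of_abs_lt hba)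

theorem pairRoot_mem_posRoots_iff {n : ℕ} {p : ℤ × ℤ} (h₁ : |p.1| ≤ n) (h₂ : |p.2| ≤ n)
    (hne : p.1 ≠ p.2) : pairRoot p ∈ PosRoots n ↔ 0 < p.1 + p.2 := by
  refine ⟨fun h ↦ height_pairRoot h₁ h₂ ▸ height_pos_of_mem_posRoots h, fun h ↦ ?_⟩
  rw [mem_posRoots_iff]
  rcases hne.lt_or_gt with hlt | hlt
  · exact ⟨p.2, p.1, abs_lt.mpr (by omega), (abs_le.mp h₂).2, (pairRoot_swap p).symm⟩
  · exact ⟨p.1, p.2, abs_lt.mpr (by omega), (abs_le.mp h₁).2, rfl⟩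

theorem IsSignedPerm.inv {n : ℕ} {w : Equiv.Perm ℤ} (hw : IsSignedPerm n w) :
    IsSignedPerm n w⁻¹ := by
  refine ⟨fun i ↦ ?_, fun i hi ↦ ?_⟩
  · rw [Equiv.Perm.inv_eq_iff_eq, hw.1, Equiv.Perm.coe_inv, Equiv.apply_symm_apply]
  · rw [Equiv.Perm.inv_eq_iff_eq, hw.2 i hi]

theorem IsSignedPerm.map_zero {n : ℕ} {w : Equiv.Perm ℤ} (hw : IsSignedPerm n w) : w 0 = 0 :=
  self_eq_neg.mp (hw.1 0)

theorem IsSignedPerm.abs_apply_le {n : ℕ} {w : Equiv.Perm ℤ} (hw : IsSignedPerm n w) {k : ℤ}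
    (hk : |k| ≤ n) : |w k| ≤ n := by
  by_contra! h
  have hfix : w k = k := w.injective (hw.2 (w k) h)
  exact (hfix ▸ h).not_ge hk

theorem IsSignedPerm.actB_eVec {n : ℕ} {w : Equiv.Perm ℤ} (hw : IsSignedPerm n w) (k : ℤ) :
    actB w (eVec k) = eVec (w k) := by
  funext t
  have h_zero : w⁻¹ t = 0 ↔ t = 0 := by rw [Equiv.Perm.inv_eq_iff_eq, hw.map_zero]
  have h_neg : w⁻¹ t = -k ↔ t = -w k := by rw [Equiv.Perm.inv_eq_iff_eq, hw.1]
  simp only [actB, eVec, h_zero, h_neg, Equiv.Perm.inv_eq_iff_eq]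

theorem IsSignedPerm.actB_pairRoot {n : ℕ} {w : Equiv.Perm ℤ} (hw : IsSignedPerm n w)
    (p : ℤ × ℤ) : actB w (pairRoot p) = pairRoot (w p.1, w p.2) :=
  congrArg₂ (· + ·) (hw.actB_eVec p.1) (hw.actB_eVec p.2)

theorem IsSignedPerm.pairRoot_mem_invSet_iff {n : ℕ} {w : Equiv.Perm ℤ} (hw : IsSignedPerm n w)
    {p : ℤ × ℤ} (h₁ : |p.1| ≤ n) (h₂ : |p.2| ≤ n) (hne : p.1 ≠ p.2) :
    pairRoot p ∈ InvSet n w ↔ 0 < p.1 + p.2 ∧ w⁻¹ p.1 + w⁻¹ p.2 < 0 := by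
  have hneg : -actB w⁻¹ (pairRoot p) ∈ PosRoots n ↔ w⁻¹ p.1 + w⁻¹ p.2 < 0 := by
    rw [hw.inv.actB_pairRoot, neg_pairRoot, pairRoot_mem_posRoots_iff]
    · exact neg_add (w⁻¹ p.1) _ ▸ neg_pos
    · exact (abs_neg _).trans_le (hw.inv.abs_apply_le h₁)
    · exact (abs_neg _).trans_le (hw.inv.abs_apply_le h₂)
    · exact neg_injective.ne (w⁻¹.injective.ne hne)
  exact and_congr (pairRoot_mem_posRoots_iff h₁ h₂ hne) hneg

section Trapezoid

variable {d r : ℕ} {w : Equiv.Perm ℤ}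

theorem IsWdr.inv_apply (hw : IsWdr d r w) {j : ℤ} (hj : 0 < j) (hjn : j ≤ d + r) :
    w⁻¹ j = if j ≤ d then -(j + r) else j - d := by
  obtain ⟨hsigned, h_low, h_high⟩ := hw
  rw [Equiv.Perm.inv_eq_iff_eq]
  split_ifs with hjd
  · rw [hsigned.1, h_high _ (by omega) (by omega)]
    ring
  · rw [h_low _ (by omega) (by omega)]
    ring

theorem IsWdr.inv_apply_add_inv_apply_neg_iff (hw : IsWdr d r w) {a b : ℤ} (hba : |b| < a)
    (han : a ≤ d + r) : w⁻¹ a + w⁻¹ b < 0 ↔ a ≤ d ∨ 1 ≤ b ∧ b ≤ d := by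
  rw [abs_lt] at hba
  rw [hw.inv_apply (by omega) han]
  rcases lt_trichotomy b 0 with hb | rfl | hb
  · have hwb := hw.inv_apply (j := -b) (by omega) (by omega)
    rw [hw.1.inv.1] at hwb
    split_ifs at hwb ⊢ <;> omega
  · rw [hw.1.inv.map_zero]
    split_ifs <;> omega
  · rw [hw.inv_apply hb (by omega)]
    split_ifs <;> omega

/-- The pairs `(a, b)` whose roots `e_a + e_b` are the inversions of `w^{(d,r)}`, the first entry
being chosen in `{1, …, d}`. They are indexed by the boxes of `Z(d,r)` through `boxPair`. -/
def invPairs (d r : ℕ) : Set (ℤ × ℤ) :=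
  {p | 1 ≤ p.1 ∧ p.1 ≤ d ∧ (|p.2| < p.1 ∨ d < p.2 ∧ p.2 ≤ d + r)}

theorem injOn_pairRoot_invPairs : Set.InjOn pairRoot (invPairs d r) := by
  rintro p ⟨hp, hpd, hp'⟩ q ⟨-, hqd, hq'⟩ h
  rw [abs_lt] at hp' hq'
  refine (eq_or_eq_swap_of_pairRoot_eq (by omega) h).resolve_right fun hswap ↦ ?_
  have h₁ : p.1 = q.2 := congrArg Prod.fst hswap
  have h₂ : p.2 = q.1 := congrArg Prod.snd hswap
  omega

theorem IsWdr.mapsTo_pairRoot_invPairs (hw : IsWdr d r w) :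
    Set.MapsTo pairRoot (invPairs d r) (InvSet (d + r) w) := by
  rintro ⟨a, b⟩ ⟨ha, had, hb⟩
  dsimp only at ha had hb
  have ha' : |a| ≤ (d + r : ℕ) := abs_le.mpr (by omega)
  have hb' : |b| ≤ (d + r : ℕ) := by rw [abs_lt] at hb; exact abs_le.mpr (by omega)
  have hne : a ≠ b := by rw [abs_lt] at hb; omega
  rw [hw.1.pairRoot_mem_invSet_iff ha' hb' hne]
  rcases hb with hb | ⟨hdb, hbn⟩
  · exact ⟨neg_lt_iff_pos_add'.mp (neg_lt_of_abs_lt hb),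
      (hw.inv_apply_add_inv_apply_neg_iff hb (by omega)).mpr (.inl had)⟩
  · have hab : |a| < b := abs_lt.mpr (by omega)
    exact ⟨by omega,
      add_comm (w⁻¹ b) _ ▸ (hw.inv_apply_add_inv_apply_neg_iff hab hbn).mpr (.inr ⟨ha, had⟩)⟩

theorem IsWdr.surjOn_pairRoot_invPairs (hw : IsWdr d r w) :
    Set.SurjOn pairRoot (invPairs d r) (InvSet (d + r) w) := by
  intro α hα
  obtain ⟨a, b, hba, han, rfl⟩ := mem_posRoots_iff.mp hα.1
  have ha : |a| ≤ (d + r : ℕ) := by rwa [abs_of_pos ((abs_nonneg b).trans_lt hba)]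
  have hneg : w⁻¹ a + w⁻¹ b < 0 :=
    ((hw.1.pairRoot_mem_invSet_iff ha (hba.le.trans han) (lt_of_abs_lt hba).ne').mp hα).2
  push_cast at han
  have hcases := (hw.inv_apply_add_inv_apply_neg_iff hba han).mp hneg
  by_cases had : a ≤ d
  · exact ⟨(a, b), ⟨(abs_nonneg b).trans_lt hba, had, .inl hba⟩, rfl⟩
  · obtain ⟨hb, hbd⟩ := hcases.resolve_left had
    exact ⟨(b, a), ⟨hb, hbd, .inr ⟨not_le.mp had, han⟩⟩, pairRoot_swap (a, b)⟩

theorem IsWdr.bijOn_pairRoot (hw : IsWdr d r w) :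
    Set.BijOn pairRoot (invPairs d r) (InvSet (d + r) w) :=
  ⟨hw.mapsTo_pairRoot_invPairs, injOn_pairRoot_invPairs, hw.surjOn_pairRoot_invPairs⟩

theorem mem_diagram_zlam_iff {p : ℤ × ℤ} : p ∈ Diagram d (Zlam d r) ↔
    1 ≤ p.1 ∧ p.1 ≤ d ∧ p.1 - d ≤ p.2 ∧ p.2 ≤ d + r - p.1 := by
  simp only [Diagram, Zlam, Set.mem_ofPred_eq]
  omega

/-- The pair `(a, b)` such that the label of the box `p` is `e_a + e_b`: here `a` depends only on
the row of `p` and `b` only on its column. -/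
def boxPair (d r : ℕ) (p : ℤ × ℤ) : ℤ × ℤ :=
  (d + 1 - p.1, if p.2 ≤ 0 then -p.2 else if p.2 ≤ r then p.2 + d else r - p.2)

theorem fLabel_eq_pairRoot_comp_boxPair : fLabel d r = pairRoot ∘ boxPair d r := by
  funext p
  simp only [fLabel, boxPair, pairRoot, Function.comp_apply]
  split_ifs
  · rw [eVec_neg, sub_eq_add_neg]
  · rfl
  · rw [← neg_sub p.2, eVec_neg, sub_eq_add_neg]

theorem bijOn_boxPair : Set.BijOn (boxPair d r) (Diagram d (Zlam d r)) (invPairs d r) := by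
  refine ⟨fun p hp ↦ ?_, fun p hp q hq h ↦ ?_, fun ⟨a, b⟩ hab ↦ ?_⟩
  · rw [mem_diagram_zlam_iff] at hp
    simp only [boxPair, invPairs, Set.mem_ofPred_eq, abs_lt]
    split_ifs <;> omega
  · rw [mem_diagram_zlam_iff] at hp hq
    simp only [boxPair, Prod.mk.injEq] at h
    apply Prod.ext
    · omega
    · split_ifs at h <;> omega
  · simp only [invPairs, Set.mem_ofPred_eq, abs_lt] at hab
    refine ⟨(d + 1 - a, if b < 0 then r - b else if b ≤ d then -b else b - d), ?_, ?_⟩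
    · simp only [mem_diagram_zlam_iff]
      split_ifs <;> omega
    · simp only [boxPair, Prod.mk.injEq]
      split_ifs <;> omega

end Trapezoid

/-- the labeling `f : D(Z(d,r)) → Φ⁺` is injective with image
exactly `Inv(w^{(d,r)})`. -/
theorem fLabel_injOn_image_eq_invSet (d r : ℕ) (hd : 1 ≤ d)
    (w : Equiv.Perm ℤ) (hw : IsWdr d r w) :
    Set.InjOn (fLabel d r) (Diagram d (Zlam d r)) ∧
      fLabel d r '' Diagram d (Zlam d r) = InvSet (d + r) w := by
  have h : Set.BijOn (fLabel d r) (Diagram d (Zlam d r)) (InvSet (d + r) w) :=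
    fLabel_eq_pairRoot_comp_boxPair ▸ hw.bijOn_pairRoot.comp bijOn_boxPair
  exact ⟨h.injOn, h.image_eq⟩

end BST
end

section
/- Let λ be a strict partition with d parts, let B ∈ BS(λ) be a balanced shifted tableau of shape λ, and let j ≥ 0 be an integer such that columns j and j+1 of D(λ) contain the same number of boxes. Then B(i,j) < B(i,j+1) for every i such that (i,j) ∈ D(λ) (equivalently (i,j+1) ∈ D(λ)). -/
open scoped BigOperators

namespace BST

/-!
To the right of column `0`, balance at a box says that its hook contains as many larger entries as
its arm has boxes; equivalently, the arm contains as many entries that are not larger as the leg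
contains larger ones. Suppose columns `j < j'` occupy the same rows, let `i` be the lowest row with
`B (i, j') ≤ B (i, j)`, and pass from `(i, j)` to `(i, j')`. The arm loses `(i, j')`, so its count
of entries that are not larger strictly drops. In every row below `i` the entry grows while the
threshold does not, so the count of larger leg entries does not drop, and the two counts cannot
agree at both boxes.
-/

/-- Balance at a single box `p`: exactly `rk p - 1` boxes of the extended hook of `p` carry a value
larger than `B p`. -/
def IsBalancedAt (d : ℕ) (lam : ℕ → ℕ) (B : ℤ × ℤ → ℕ) (p : ℤ × ℤ) : Prop :=
  ({q ∈ ExtHook d lam p.1 p.2 | B p < ExtFilling d B q}.ncard : ℤ) = rk d lam p.1 p.2 - 1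

/-- Column `c` of the diagram, recorded by the row indices of its boxes. -/
def column (d : ℕ) (lam : ℕ → ℕ) (c : ℤ) : Set ℤ := {k | (k, c) ∈ Diagram d lam}

/-- The arm of the box `(i, c)`, recorded by the column indices of the boxes to its right. -/
def arm (d : ℕ) (lam : ℕ → ℕ) (i c : ℤ) : Set ℤ := {c' | (i, c') ∈ Diagram d lam ∧ c < c'}

/-- The leg of the box `(i, c)`, recorded by the row indices of the boxes below it. -/
def leg (d : ℕ) (lam : ℕ → ℕ) (i c : ℤ) : Set ℤ := {k ∈ column d lam c | i < k}

section Shape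

variable {d : ℕ} {lam : ℕ → ℕ} {i c c' : ℤ}

theorem mem_diagram : (i, c) ∈ Diagram d lam ↔
    1 ≤ i ∧ i ≤ d ∧ i - d ≤ c ∧ c + d + 1 ≤ lam i.toNat + i :=
  Iff.rfl

theorem column_finite (d : ℕ) (lam : ℕ → ℕ) (c : ℤ) : (column d lam c).Finite :=
  (Set.finite_Icc 1 (d : ℤ)).subset fun _ hk => ⟨hk.1, hk.2.1⟩

theorem leg_finite (d : ℕ) (lam : ℕ → ℕ) (i c : ℤ) : (leg d lam i c).Finite :=
  (column_finite d lam c).sep _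

theorem ncard_column (d : ℕ) (lam : ℕ → ℕ) (c : ℤ) :
    (column d lam c).ncard = {p ∈ Diagram d lam | p.2 = c}.ncard := by
  rw [← Set.ncard_image_of_injective _ (Prod.mk_left_injective c)]
  congr 1
  ext ⟨k, c'⟩
  simp only [column, Set.mem_image, Set.mem_ofPred_eq, Prod.mk.injEq]
  grind

theorem column_subset_column (hc : 0 ≤ c) (hcc' : c ≤ c') :
    column d lam c' ⊆ column d lam c := by
  intro k hk
  simp only [column, Set.mem_ofPred_eq, mem_diagram] at hk ⊢
  omega

theorem column_eq_column_of_ncard_eq (hc : 0 ≤ c) (hcc' : c ≤ c')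
    (hcard : {p ∈ Diagram d lam | p.2 = c}.ncard = {p ∈ Diagram d lam | p.2 = c'}.ncard) :
    column d lam c' = column d lam c :=
  Set.eq_of_subset_of_ncard_le (column_subset_column hc hcc')
    (by rw [ncard_column, ncard_column, hcard]) (column_finite d lam c)

theorem arm_eq_Ioc (h : (i, c) ∈ Diagram d lam) :
    arm d lam i c = Set.Ioc c (lam i.toNat + i - d - 1) := by
  ext c'
  simp only [arm, Set.mem_ofPred_eq, Set.mem_Ioc, mem_diagram] at h ⊢
  omega

theorem arm_finite (h : (i, c) ∈ Diagram d lam) : (arm d lam i c).Finite :=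
  arm_eq_Ioc h ▸ Set.finite_Ioc _ _

theorem ncard_arm_eq_rk_sub_one (hc : 0 ≤ c) (h : (i, c) ∈ Diagram d lam) :
    ((arm d lam i c).ncard : ℤ) = rk d lam i c - 1 := by
  rw [arm_eq_Ioc h, ← Finset.coe_Ioc, Set.ncard_coe_finset, Int.card_Ioc, rk, if_pos hc]
  rw [mem_diagram] at h
  omega

theorem extHook_of_nonneg (hc : 0 ≤ c) :
    ExtHook d lam i c = insert (i, c) ((i, ·) '' arm d lam i c ∪ (·, c) '' leg d lam i c) := by
  ext ⟨k, c'⟩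
  simp only [ExtHook, Hook, arm, leg, column, Set.mem_union, Set.mem_insert_iff,
    Set.mem_singleton_iff, Set.mem_image, Set.mem_ofPred_eq, Prod.mk.injEq, hc.not_gt]
  grind

end Shape

section Balance

variable {d : ℕ} {lam : ℕ → ℕ} {B : ℤ × ℤ → ℕ} {i c c' : ℤ}

theorem extFilling_of_mem_diagram {p : ℤ × ℤ} (hp : p ∈ Diagram d lam) :
    ExtFilling d B p = B p :=
  if_neg (by have := hp.2.2.1; omega)

theorem extHook_gt_eq (hc : 0 ≤ c) (h : (i, c) ∈ Diagram d lam) :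
    {q ∈ ExtHook d lam i c | B (i, c) < ExtFilling d B q} =
      (i, ·) '' {c' ∈ arm d lam i c | B (i, c) < B (i, c')} ∪
        (·, c) '' {k ∈ leg d lam i c | B (i, c) < B (k, c)} := by
  have harm : ∀ c' ∈ arm d lam i c, ExtFilling d B (i, c') = B (i, c') :=
    fun _ hc' => extFilling_of_mem_diagram hc'.1
  have hleg : ∀ k ∈ leg d lam i c, ExtFilling d B (k, c) = B (k, c) :=
    fun _ hk => extFilling_of_mem_diagram hk.1
  have hself : ExtFilling d B (i, c) = B (i, c) := extFilling_of_mem_diagram h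
  rw [extHook_of_nonneg hc]
  ext q
  simp only [Set.mem_ofPred_eq, Set.mem_insert_iff, Set.mem_union, Set.mem_image]
  grind

theorem ncard_extHook_gt (hc : 0 ≤ c) (h : (i, c) ∈ Diagram d lam) :
    {q ∈ ExtHook d lam i c | B (i, c) < ExtFilling d B q}.ncard =
      {c' ∈ arm d lam i c | B (i, c) < B (i, c')}.ncard +
        {k ∈ leg d lam i c | B (i, c) < B (k, c)}.ncard := by
  have hdisj : Disjoint ((i, ·) '' {c' ∈ arm d lam i c | B (i, c) < B (i, c')})
      ((·, c) '' {k ∈ leg d lam i c | B (i, c) < B (k, c)}) := by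
    rw [Set.disjoint_left]
    rintro _ ⟨c', _, rfl⟩ ⟨k, hk, hkc⟩
    exact hk.1.2.ne (Prod.mk.inj hkc).1.symm
  rw [extHook_gt_eq hc h, Set.ncard_union_eq hdisj (((arm_finite h).sep _).image _)
      (((leg_finite d lam i c).sep _).image _),
    Set.ncard_image_of_injective _ (Prod.mk_right_injective i),
    Set.ncard_image_of_injective _ (Prod.mk_left_injective c)]

theorem IsBalancedAt.ncard_arm_le_eq_ncard_leg_gt (hB : IsBalancedAt d lam B (i, c))
    (hc : 0 ≤ c) (h : (i, c) ∈ Diagram d lam) :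
    {c' ∈ arm d lam i c | B (i, c') ≤ B (i, c)}.ncard =
      {k ∈ leg d lam i c | B (i, c) < B (k, c)}.ncard := by
  have hsplit : {c' ∈ arm d lam i c | B (i, c) < B (i, c')}.ncard +
      {c' ∈ arm d lam i c | B (i, c') ≤ B (i, c)}.ncard = (arm d lam i c).ncard := by
    rw [← Set.ncard_inter_add_ncard_sdiff_eq_ncard (arm d lam i c) {c' | B (i, c) < B (i, c')}
      (arm_finite h)]
    congr 2
    ext c'
    simp only [Set.mem_ofPred_eq, Set.mem_sdiff, not_lt]
  have hgt := ncard_extHook_gt (B := B) hc h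
  have harm := ncard_arm_eq_rk_sub_one hc h
  simp only [IsBalancedAt] at hB
  omega

theorem ncard_arm_le_lt_of_le (hcc' : c < c') (h : (i, c) ∈ Diagram d lam)
    (h' : (i, c') ∈ Diagram d lam) (hle : B (i, c') ≤ B (i, c)) :
    {x ∈ arm d lam i c' | B (i, x) ≤ B (i, c')}.ncard <
      {x ∈ arm d lam i c | B (i, x) ≤ B (i, c)}.ncard := by
  refine Set.ncard_lt_ncard ?_ ((arm_finite h).sep _)
  refine (Set.ssubset_iff_of_subset ?_).2 ⟨c', ⟨⟨h', hcc'⟩, hle⟩, fun hx => hx.1.2.false⟩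
  exact fun x ⟨⟨hx, hlt⟩, hxle⟩ => ⟨⟨hx, hcc'.trans hlt⟩, hxle.trans hle⟩

theorem ncard_leg_gt_le_of_le (hcol : column d lam c ⊆ column d lam c')
    (hle : B (i, c') ≤ B (i, c)) (hleg : ∀ k ∈ leg d lam i c, B (k, c) ≤ B (k, c')) :
    {k ∈ leg d lam i c | B (i, c) < B (k, c)}.ncard ≤
      {k ∈ leg d lam i c' | B (i, c') < B (k, c')}.ncard := by
  refine Set.ncard_le_ncard ?_ ((leg_finite d lam i c').sep _)
  exact fun k ⟨hk, hgt⟩ => ⟨⟨hcol hk.1, hk.2⟩, hle.trans_lt (hgt.trans_le (hleg k hk))⟩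

theorem balanced_same_col_lt_general (hB : ∀ p ∈ Diagram d lam, IsBalancedAt d lam B p)
    {j j' : ℤ} (hj : 0 ≤ j) (hjj' : j < j')
    (hcol : {p ∈ Diagram d lam | p.2 = j}.ncard = {p ∈ Diagram d lam | p.2 = j'}.ncard) :
    ∀ i : ℤ, (i, j) ∈ Diagram d lam → B (i, j) < B (i, j') := by
  have hcolumn : column d lam j' = column d lam j :=
    column_eq_column_of_ncard_eq hj hjj'.le hcol
  have hwf : (column d lam j).WellFoundedOn (· > ·) := (column_finite d lam j).wellFoundedOn
  refine fun i hi => hwf.induction (P := fun i => B (i, j) < B (i, j')) hi fun i hi ih => ?_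
  by_contra! hle
  have hi' : (i, j') ∈ Diagram d lam := hcolumn.ge hi
  have harm := ncard_arm_le_lt_of_le hjj' hi hi' hle
  have hleg := ncard_leg_gt_le_of_le hcolumn.ge hle fun k hk => (ih k hk.1 hk.2).le
  rw [(hB _ hi).ncard_arm_le_eq_ncard_leg_gt hj hi,
    (hB _ hi').ncard_arm_le_eq_ncard_leg_gt (hj.trans hjj'.le) hi'] at harm
  exact harm.not_ge hleg

end Balance

/-- if columns `j` and `j+1` (with `j ≥ 0`) of a balanced shifted tableau
have the same number of boxes, then `B(i,j) < B(i,j+1)` whenever `(i,j) ∈ D(λ)`. -/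
theorem balanced_same_col_lt (d : ℕ) (hd : 1 ≤ d) (lam : ℕ → ℕ)
    (hlam : IsStrictPartition d lam) (B : ℤ × ℤ → ℕ) (hB : IsBalanced d lam B)
    (j : ℤ) (hj : 0 ≤ j)
    (hcol : {p ∈ Diagram d lam | p.2 = j}.ncard = {p ∈ Diagram d lam | p.2 = j + 1}.ncard) :
    ∀ i : ℤ, ((i, j) ∈ Diagram d lam) → B (i, j) < B (i, j + 1) :=
  balanced_same_col_lt_general hB.2 hj (lt_add_one j) hcol

end BST
end

section
/- Let d ≥ 1 and r ≥ 0, and let T be the shifted tableau of shape Z(d,r) with T(i,c) = r − c for c < 0 and T(i,c) = c for c ≥ 0 (so row i of T reads r+d−i, r+d−i−1, …, r+1, 0, 1, …, r+d−i). Then the reading word π(T) = T_d T_{d−1} ⋯ T_1, viewed as a word in the letters {0, …, d+r−1}, is a reduced word of w^{(d,r)} ∈ W(B_{d+r}). -/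
open scoped BigOperators

namespace BST

/-!
The row of the tableau with `k` boxes left of column `0` reads as a descending run
`r + k, …, r + 1` followed by an ascending run `0, …, r + k`. Multiplying `w^{(k,r)}` on the right
by the descending run gives `w^{(k,r+1)}`, and multiplying `w^{(k,r+1)}` by the ascending run gives
`w^{(k+1,r)}`, so reading the rows from bottom to top produces `w^{(d,r)}`.

Left multiplication by a simple reflection creates at most one inversion, so a word of `u` has at
least as many letters as `u` has inversions. The word `π(T)` has `d (d + r)` letters, and
`w^{(d,r)}` has that many inversions, indexed by `(i, j) ∈ [1, d + r] × (r, d + r]`: the pair stands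
for the root `e_j - e_i` when `i < j`, and for `e_i + e_j` (or `e_i`, if `i = j`) when `j ≤ i`.
-/

lemma sB_apply (a : ℕ) (x : ℤ) : sB a x =
    if a = 0 then (if x = 1 then -1 else if x = -1 then 1 else x)
    else if x = a then a + 1 else if x = a + 1 then a
    else if x = -a then -a - 1 else if x = -a - 1 then -a else x := by
  unfold sB
  by_cases h : a = 0
  · simp [h, Equiv.swap_apply_def]
  · simp only [h, if_false, Equiv.Perm.mul_apply, Equiv.swap_apply_def]
    split_ifs <;> omega

lemma odd_sB (a : ℕ) : Function.Odd (sB a) := by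
  intro x
  rw [sB_apply, sB_apply]
  split_ifs <;> omega

lemma sB_apply_of_lt_abs {a : ℕ} {x : ℤ} (hx : a + 1 < |x|) : sB a x = x := by
  rw [lt_abs] at hx
  rw [sB_apply]
  split_ifs <;> omega

lemma sB_zero_one : sB 0 1 = -1 := by simp [sB]

lemma sB_apply_self {a : ℕ} (ha : a ≠ 0) : sB a a = a + 1 := by
  simp [sB_apply, ha]

lemma sB_apply_succ {a : ℕ} (ha : a ≠ 0) : sB a (a + 1) = a := by
  simp [sB_apply, ha]

lemma sB_apply_of_lt {a : ℕ} {x : ℤ} (hx : 1 ≤ x) (hxa : x < a) : sB a x = x := by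
  rw [sB_apply]
  split_ifs <;> omega

lemma wordProd_nil : wordProd [] = 1 := rfl

lemma wordProd_cons (a : ℕ) (L : List ℕ) : wordProd (a :: L) = sB a * wordProd L := by
  simp [wordProd]

lemma wordProd_append (L M : List ℕ) : wordProd (L ++ M) = wordProd L * wordProd M := by
  simp [wordProd]

lemma wordProd_singleton (a : ℕ) : wordProd [a] = sB a := by
  simp [wordProd]

lemma odd_wordProd (L : List ℕ) : Function.Odd (wordProd L) := by
  induction L with
  | nil => exact fun _ => rfl
  | cons a L ih =>
    intro x
    rw [wordProd_cons, Equiv.Perm.mul_apply, Equiv.Perm.mul_apply, ih, odd_sB]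

lemma isSignedPerm_wordProd {n : ℕ} {L : List ℕ} (hL : ∀ a ∈ L, a < n) :
    IsSignedPerm n (wordProd L) := by
  refine ⟨odd_wordProd L, fun x hx => ?_⟩
  induction L with
  | nil => rfl
  | cons a L ih =>
    rw [List.forall_mem_cons] at hL
    rw [wordProd_cons, Equiv.Perm.mul_apply, ih hL.2, sB_apply_of_lt_abs (by omega)]

namespace IsSignedPerm

variable {m n : ℕ} {u v : Equiv.Perm ℤ}

lemma mono (hmn : m ≤ n) (hu : IsSignedPerm m u) : IsSignedPerm n u :=
  ⟨hu.1, fun i hi => hu.2 i (by omega)⟩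

lemma mul (hu : IsSignedPerm n u) (hv : IsSignedPerm n v) : IsSignedPerm n (u * v) := by
  refine ⟨fun i => ?_, fun i hi => ?_⟩
  · rw [Equiv.Perm.mul_apply, Equiv.Perm.mul_apply, hv.1, hu.1]
  · rw [Equiv.Perm.mul_apply, hv.2 i hi, hu.2 i hi]

lemma ext (hu : IsSignedPerm n u) (hv : IsSignedPerm n v)
    (h : ∀ i : ℤ, 1 ≤ i → i ≤ n → u i = v i) : u = v := by
  have eq_of_pos (i : ℤ) (hi : 0 < i) : u i = v i := by
    rcases le_or_gt i n with hin | hin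
    · exact h i hi hin
    · have hi' : (n : ℤ) < |i| := by rwa [abs_of_pos hi]
      rw [hu.2 i hi', hv.2 i hi']
  ext i
  rcases lt_trichotomy i 0 with hi | rfl | hi
  · have := eq_of_pos (-i) (by omega)
    rwa [hu.1, hv.1, neg_inj] at this
  · rw [Function.Odd.map_zero hu.1, Function.Odd.map_zero hv.1]
  · exact eq_of_pos i hi

end IsSignedPerm

/-- The inversions of a signed permutation `u`: the pair `(i, j)` with `0 < |i| ≤ j` and `i < j`
encodes the positive root `e_j - e_i` (that is `e_j + e_{-i}` if `-j < i < 0`, and a multiple of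
`e_j` if `i = -j`), and it is an inversion if `u` sends that root to a negative one. -/
def inversions (u : Equiv.Perm ℤ) : Set (ℤ × ℤ) :=
  {p | p.1 ≠ 0 ∧ |p.1| ≤ p.2 ∧ p.1 < p.2 ∧ u p.2 < u p.1}

lemma inversions_one : inversions 1 = ∅ :=
  Set.eq_empty_of_forall_notMem fun _ ⟨_, _, hlt, hgt⟩ => lt_asymm hlt hgt

lemma eq_or_neg_eq_of_sB_lt_sB {a : ℕ} {x y : ℤ} (hx : x ≠ 0) (hy : y ≠ 0) (hxy : x < y)
    (h : sB a y < sB a x) :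
    (x = (if a = 0 then -1 else (a : ℤ)) ∧ y = a + 1) ∨
      (-y = (if a = 0 then -1 else (a : ℤ)) ∧ -x = a + 1) := by
  rw [sB_apply, sB_apply] at h
  split_ifs at h ⊢ <;> omega

lemma exists_inversions_sB_mul_subset_insert (a : ℕ) {u : Equiv.Perm ℤ} (hu : Function.Odd u) :
    ∃ q, inversions (sB a * u) ⊆ insert q (inversions u) := by
  set x := u⁻¹ (if a = 0 then -1 else (a : ℤ)) with hx
  set y := u⁻¹ (a + 1) with hy
  refine ⟨if |x| ≤ y then (x, y) else (-y, -x), ?_⟩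
  rintro ⟨i, j⟩ ⟨hi : i ≠ 0, hij : |i| ≤ j, hlt : i < j, hinv : sB a (u j) < sB a (u i)⟩
  by_cases hmem : u j < u i
  · exact Or.inr ⟨hi, hij, hlt, hmem⟩
  left
  have apply_ne_zero {k : ℤ} (hk : k ≠ 0) : u k ≠ 0 := by
    rwa [← hu.map_zero, u.injective.ne_iff]
  have hlt' : u i < u j := lt_of_le_of_ne (not_lt.1 hmem) (u.injective.ne hlt.ne)
  have hj : j ≠ 0 := by
    have := abs_pos.2 hi
    omega
  rcases eq_or_neg_eq_of_sB_lt_sB (apply_ne_zero hi) (apply_ne_zero hj) hlt' hinv with h | h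
  · obtain ⟨rfl, rfl⟩ : i = x ∧ j = y := by
      rwa [hx, hy, Equiv.Perm.eq_inv_iff_eq, Equiv.Perm.eq_inv_iff_eq]
    rw [if_pos hij]
  · obtain ⟨hjx, hiy⟩ : -j = x ∧ -i = y := by
      rwa [hx, hy, Equiv.Perm.eq_inv_iff_eq, Equiv.Perm.eq_inv_iff_eq, hu, hu]
    rw [← hjx, ← hiy, neg_neg, neg_neg, abs_neg]
    split_ifs with hji
    · -- Both normal forms apply only when `i = -j`, and then they coincide.
      rw [abs_le] at hij hji
      ext <;> dsimp only <;> omega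
    · rfl

lemma encard_inversions_wordProd_le (L : List ℕ) :
    (inversions (wordProd L)).encard ≤ L.length := by
  induction L with
  | nil => simp [wordProd_nil, inversions_one]
  | cons a L ih =>
    obtain ⟨q, hq⟩ := exists_inversions_sB_mul_subset_insert a (odd_wordProd L)
    calc (inversions (wordProd (a :: L))).encard
        ≤ (insert q (inversions (wordProd L))).encard := by
          rw [wordProd_cons]
          exact Set.encard_le_encard hq
      _ ≤ (inversions (wordProd L)).encard + 1 := Set.encard_insert_le _ _
      _ ≤ (a :: L).length := by
          rw [List.length_cons, Nat.cast_add_one]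
          gcongr

lemma isReducedWord_of_length_le_encard_inversions {n : ℕ} {L : List ℕ} (hL : ∀ a ∈ L, a < n)
    (hle : (L.length : ℕ∞) ≤ (inversions (wordProd L)).encard) :
    IsReducedWord n (wordProd L) L := by
  refine ⟨hL, rfl, le_antisymm ?_ (Nat.sInf_le ⟨L, hL, rfl, rfl⟩)⟩
  refine le_csInf ⟨_, L, hL, rfl, rfl⟩ ?_
  rintro _ ⟨M, -, hM, rfl⟩
  have := hle.trans (hM ▸ encard_inversions_wordProd_le M)
  exact_mod_cast this

lemma wordProd_range_apply_of_lt {m : ℕ} {x : ℤ} (hx : 1 ≤ x) (hxm : x < m) :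
    wordProd (List.range m) x = x + 1 := by
  induction m with
  | zero => omega
  | succ m ih =>
    rw [List.range_succ, wordProd_append, wordProd_singleton, Equiv.Perm.mul_apply]
    obtain hlt | rfl : x < m ∨ x = m := by omega
    · rw [sB_apply_of_lt hx hlt, ih hlt]
    · rw [sB_apply_self (by omega)]
      exact (isSignedPerm_wordProd fun _ => List.mem_range.1).2 _ (lt_abs.2 (by omega))

lemma wordProd_range_succ_apply_last (m : ℕ) : wordProd (List.range (m + 1)) (m + 1) = -1 := by
  induction m with
  | zero => simpa [wordProd_singleton] using sB_zero_one
  | succ m ih =>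
    rw [List.range_succ, wordProd_append, wordProd_singleton, Equiv.Perm.mul_apply,
      sB_apply_succ m.succ_ne_zero]
    exact_mod_cast ih

section DescendingRun

variable (r k : ℕ)

lemma reverse_range'_succ :
    (List.range' (r + 1) (k + 1)).reverse = (r + k + 1) :: (List.range' (r + 1) k).reverse := by
  rw [List.range'_concat, List.reverse_concat, one_mul, add_right_comm]

lemma isSignedPerm_wordProd_reverse_range' :
    IsSignedPerm (r + k + 1) (wordProd (List.range' (r + 1) k).reverse) :=
  isSignedPerm_wordProd fun a ha => by
    rw [List.mem_reverse, List.mem_range'_1] at ha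
    omega

lemma wordProd_reverse_range'_apply_of_le {x : ℤ} (hx : 1 ≤ x) (hxr : x ≤ r) :
    wordProd (List.range' (r + 1) k).reverse x = x := by
  induction k with
  | zero => rfl
  | succ k ih =>
    rw [reverse_range'_succ, wordProd_cons, Equiv.Perm.mul_apply, ih,
      sB_apply_of_lt hx (by omega)]

lemma wordProd_reverse_range'_apply_first :
    wordProd (List.range' (r + 1) k).reverse (r + 1) = r + k + 1 := by
  induction k with
  | zero => simp [wordProd_nil]
  | succ k ih =>
    rw [reverse_range'_succ, wordProd_cons, Equiv.Perm.mul_apply, ih]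
    exact_mod_cast sB_apply_self (r + k).succ_ne_zero

lemma wordProd_reverse_range'_apply_of_gt {x : ℤ} (hrx : r + 1 < x) (hx : x ≤ r + k + 1) :
    wordProd (List.range' (r + 1) k).reverse x = x - 1 := by
  induction k with
  | zero => omega
  | succ k ih =>
    rw [reverse_range'_succ, wordProd_cons, Equiv.Perm.mul_apply]
    obtain hle | rfl : x ≤ r + k + 1 ∨ x = r + k + 1 + 1 := by omega
    · rw [ih hle, sB_apply_of_lt (by omega) (by omega)]
    · rw [(isSignedPerm_wordProd_reverse_range' r k).2 _ (lt_abs.2 (by omega)),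
        add_sub_cancel_right]
      exact_mod_cast sB_apply_succ (r + k).succ_ne_zero

end DescendingRun

lemma rowWord_sub_eq_append {d k : ℕ} (r : ℕ) (hk : k ≤ d) :
    rowWord d r (d - k) = (List.range' (r + 1) k).reverse ++ List.range (r + k + 1) := by
  rw [rowWord, Nat.sub_sub_self hk]
  apply List.ext_getElem
  · simp only [List.length_map, List.length_range, List.length_append, List.length_reverse,
      List.length_range']
    omega
  · intro t _ _
    simp only [List.getElem_map, List.getElem_range, List.getElem_append, List.length_reverse,
      List.length_range', List.getElem_reverse, List.getElem_range']
    split_ifs <;> omega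

lemma piWord_eq_flatMap (d r : ℕ) : piWord d r =
    (List.range d).flatMap fun k => (List.range' (r + 1) k).reverse ++ List.range (r + k + 1) :=
  List.flatMap_congr fun _ hk => rowWord_sub_eq_append r (List.mem_range.1 hk).le

lemma piWord_zero (r : ℕ) : piWord 0 r = [] := rfl

lemma piWord_succ (d r : ℕ) : piWord (d + 1) r =
    piWord d r ++ ((List.range' (r + 1) d).reverse ++ List.range (r + d + 1)) := by
  rw [piWord_eq_flatMap, piWord_eq_flatMap, List.range_succ, List.flatMap_append,
    List.flatMap_singleton]

lemma length_piWord (d r : ℕ) : (piWord d r).length = (d + r) * d := by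
  induction d with
  | zero => rw [piWord_zero, List.length_nil, mul_zero]
  | succ d ih =>
    simp only [piWord_succ, List.length_append, List.length_reverse, List.length_range',
      List.length_range, ih]
    ring

lemma lt_of_mem_piWord {d r a : ℕ} (ha : a ∈ piWord d r) : a < d + r := by
  rw [piWord_eq_flatMap, List.mem_flatMap] at ha
  obtain ⟨k, hk, ha⟩ := ha
  rw [List.mem_range] at hk
  rw [List.mem_append, List.mem_reverse, List.mem_range'_1, List.mem_range] at ha
  omega

namespace IsWdr

variable {d r : ℕ} {u v : Equiv.Perm ℤ}

lemma unique (hu : IsWdr d r u) (hv : IsWdr d r v) : u = v := by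
  refine hu.1.ext hv.1 fun i hi hin => ?_
  push_cast at hin
  rcases le_or_gt i r with hir | hir
  · rw [hu.2.1 i hi hir, hv.2.1 i hi hir]
  · rw [hu.2.2 i hir hin, hv.2.2 i hir hin]

lemma one (r : ℕ) : IsWdr 0 r 1 := by
  refine ⟨⟨fun _ => rfl, fun _ _ => rfl⟩, fun i _ _ => ?_, fun i _ _ => ?_⟩
  · simp
  · omega

lemma mul_descendingRun (hu : IsWdr d r u) :
    IsWdr d (r + 1) (u * wordProd (List.range' (r + 1) d).reverse) := by
  refine ⟨(hu.1.mono (by omega)).mul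
    ((isSignedPerm_wordProd_reverse_range' r d).mono (by omega)), fun i hi hir => ?_,
    fun i hir hin => ?_⟩ <;> rw [Equiv.Perm.mul_apply] <;> push_cast at *
  · obtain hle | rfl : i ≤ r ∨ i = r + 1 := by omega
    · rw [wordProd_reverse_range'_apply_of_le r d hi hle, hu.2.1 i hi hle]
    · rw [wordProd_reverse_range'_apply_first, hu.1.2 _ (lt_abs.2 (by omega))]
      ring
  · rw [wordProd_reverse_range'_apply_of_gt r d hir (by omega), hu.2.2 _ (by omega) (by omega)]
    ring

lemma mul_ascendingRun (hu : IsWdr d (r + 1) u) :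
    IsWdr (d + 1) r (u * wordProd (List.range (r + d + 1))) := by
  have hrun : IsSignedPerm (r + d + 1) (wordProd (List.range (r + d + 1))) :=
    isSignedPerm_wordProd fun _ => List.mem_range.1
  refine ⟨(hu.1.mono (by omega)).mul (hrun.mono (by omega)), fun i hi hir => ?_,
    fun i hir hin => ?_⟩ <;> rw [Equiv.Perm.mul_apply] <;> push_cast at *
  · rw [wordProd_range_apply_of_lt hi (by omega), hu.2.1 _ (by omega) (by omega)]
    ring
  · obtain hlt | rfl : i < r + d + 1 ∨ i = r + d + 1 := by omega
    · rw [wordProd_range_apply_of_lt (by omega) (by omega),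
        hu.2.2 _ (by omega) (by omega)]
      push_cast
      ring
    · have hlast : wordProd (List.range (r + d + 1)) (r + d + 1) = -1 := by
        exact_mod_cast wordProd_range_succ_apply_last (r + d)
      rw [hlast, hu.1.1, hu.2.1 1 le_rfl (by omega)]
      ring

end IsWdr

lemma isWdr_wordProd_piWord (d r : ℕ) : IsWdr d r (wordProd (piWord d r)) := by
  induction d with
  | zero => exact IsWdr.one r
  | succ d ih =>
    rw [piWord_succ, wordProd_append, wordProd_append, ← mul_assoc]
    exact ih.mul_descendingRun.mul_ascendingRun

/-- For `p = (i, j)` with positive entries, the positive root `e_j - e_i` (if `i < j`) or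
`e_i + e_j` (if `j ≤ i`, up to a scalar), encoded as a pair in the way of `inversions`. As `i` runs
over `[1, d + r]` and `j` over `(r, d + r]`, it enumerates the inversions of `w^{(d,r)}`. -/
def rootPair (p : ℤ × ℤ) : ℤ × ℤ := if p.1 < p.2 then p else (-p.2, p.1)

lemma injOn_rootPair : Set.InjOn rootPair {p | 0 < p.1 ∧ 0 < p.2} := by
  rintro ⟨i, j⟩ ⟨hi : 0 < i, hj : 0 < j⟩ ⟨k, l⟩ ⟨hk : 0 < k, hl : 0 < l⟩ h
  unfold rootPair at h
  split_ifs at h <;> simp only [Prod.mk.injEq] at h ⊢ <;> omega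

lemma IsWdr.rootPair_mem_inversions {d r : ℕ} {w : Equiv.Perm ℤ} (hw : IsWdr d r w) {i j : ℤ}
    (hi : 1 ≤ i) (hid : i ≤ d + r) (hrj : r < j) (hjd : j ≤ d + r) :
    rootPair (i, j) ∈ inversions w := by
  have hwj : w j = -(j - r) := hw.2.2 j hrj hjd
  by_cases hij : i < j
  · rw [rootPair, if_pos hij]
    refine ⟨by omega, ?_, hij, ?_⟩
    · rw [abs_of_pos (by omega)]
      exact hij.le
    · change w j < w i
      rcases le_or_gt i r with hir | hir
      · rw [hwj, hw.2.1 i hi hir]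
        omega
      · rw [hwj, hw.2.2 i hir hid]
        omega
  · rw [rootPair, if_neg hij]
    refine ⟨by omega, ?_, by omega, ?_⟩
    · rw [abs_neg, abs_of_pos (by omega)]
      exact not_lt.1 hij
    · change w i < w (-j)
      rw [hw.1.1, hwj, hw.2.2 i (by omega) hid]
      omega

lemma IsWdr.le_encard_inversions {d r : ℕ} {w : Equiv.Perm ℤ} (hw : IsWdr d r w) :
    (((d + r) * d : ℕ) : ℕ∞) ≤ (inversions w).encard := by
  set box : Finset (ℤ × ℤ) := Finset.Icc 1 (d + r : ℤ) ×ˢ Finset.Ioc (r : ℤ) (d + r)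
  have mem_box {p : ℤ × ℤ} (hp : p ∈ (box : Set (ℤ × ℤ))) :
      (1 ≤ p.1 ∧ p.1 ≤ d + r) ∧ r < p.2 ∧ p.2 ≤ d + r := by
    simpa [box] using hp
  have card_box : box.card = (d + r) * d := by
    rw [Finset.card_product, Int.card_Icc, Int.card_Ioc]
    congr 1 <;> omega
  rw [← card_box, ← Set.encard_coe_eq_coe_finsetCard]
  refine Set.encard_le_encard_of_injOn (f := rootPair) (fun p hp => ?_)
    (injOn_rootPair.mono fun p hp => ?_)
  · obtain ⟨⟨hi, hid⟩, hrj, hjd⟩ := mem_box hp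
    exact hw.rootPair_mem_inversions hi hid hrj hjd
  · obtain ⟨⟨hi, -⟩, hrj, -⟩ := mem_box hp
    exact ⟨by omega, by omega⟩

/-- the reading word `π(T)` of the distinguished tableau of shape
`Z(d,r)` is a reduced word of `w^{(d,r)}`. -/
theorem piWord_is_reduced (d r : ℕ) (hd : 1 ≤ d)
    (w : Equiv.Perm ℤ) (hw : IsWdr d r w) :
    IsReducedWord (d + r) w (piWord d r) := by
  have hprod : IsWdr d r (wordProd (piWord d r)) := isWdr_wordProd_piWord d r
  rw [hw.unique hprod]
  apply isReducedWord_of_length_le_encard_inversions fun _ => lt_of_mem_piWord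
  rw [length_piWord]
  exact hprod.le_encard_inversions

end BST
end

section
/- Let d ≥ 1 and r ≥ 0, and let T be the shifted tableau of shape Z(d,r) with T(i,c) = r − c for c < 0 and T(i,c) = c for c ≥ 0. For every i ∈ {1, …, d}: the row T_i = (r+d−i, …, r+1, 0, 1, …, r+d−i) is a unimodal sequence of length r + 2(d−i) + 1, and every unimodal subsequence of the concatenated word T_d T_{d−1} ⋯ T_i has length at most r + 2(d−i) + 1. -/
/-!
The word `T_d T_{d-1} ⋯ T_i` is covered by `d - i + 1` weakly increasing subwords: the `c`-th one,
for `0 ≤ c ≤ d - i`, runs through `0, 1, …, r` in the row `T_{d-c}` and then through the letters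
`r + c + 1` of the later rows. The strictly decreasing part of a unimodal subsequence meets each of
them at most once, so it has at most `d - i + 1` letters. The strictly increasing part consists of
distinct letters from `{0, …, r + d - i}`, so it has at most `r + d - i + 1` of them. The minimum
belongs to both parts, which saves one.
-/

open scoped BigOperators

namespace BST

section ChainCovers

variable {ι α : Type*}

theorem length_le_card_of_nodup {L : List α} {s : Finset α} (hL : L.Nodup) (hs : ∀ x ∈ L, x ∈ s) :
    L.length ≤ s.card := by
  classical
  rw [← List.toFinset_card_of_nodup hL]
  exact Finset.card_le_card fun x hx => hs x (List.mem_toFinset.1 hx)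

/-- `IsChainCover W s`: the word of the second components of `W` is partitioned into weakly
increasing subwords indexed by `s`, the first component of a pair naming the subword that contains
the letter. -/
structure IsChainCover [Preorder α] (W : List (ι × α)) (s : Finset ι) : Prop where
  fst_mem : ∀ p ∈ W, p.1 ∈ s
  pairwise : W.Pairwise fun p q => p.1 = q.1 → p.2 ≤ q.2

theorem IsChainCover.length_le_card_of_sortedGT [Preorder α] {W : List (ι × α)} {s : Finset ι}
    (hW : IsChainCover W s) {L : List α} (hL : L.Sublist (W.map Prod.snd)) (hdec : L.SortedGT) :
    L.length ≤ s.card := by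
  obtain ⟨V, hVW, rfl⟩ := List.sublist_map_iff.1 hL
  have fst_nodup : (V.map Prod.fst).Nodup :=
    List.pairwise_map.2 <| (hW.pairwise.sublist hVW).imp₂
      (fun _ _ hle hgt heq => (hle heq).not_gt hgt) (List.pairwise_map.1 hdec.pairwise)
  have fst_mem : ∀ c ∈ V.map Prod.fst, c ∈ s :=
    List.forall_mem_map.2 fun p hp => hW.fst_mem p (hVW.subset hp)
  simpa using length_le_card_of_nodup fst_nodup fst_mem

end ChainCovers

section Unimodal

theorem unimodal_iff_exists_sortedGT_take_sortedLT_drop {L : List ℕ} :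
    Unimodal L ↔ ∃ k < L.length, (L.take (k + 1)).SortedGT ∧ (L.drop k).SortedLT := by
  simp only [Unimodal, List.sortedGT_iff_pairwise, List.sortedLT_iff_pairwise,
    List.pairwise_iff_getElem, List.length_take, List.length_drop, List.getElem_take,
    List.getElem_drop]
  simp only [← List.getD_eq_getElem _ 0]
  refine exists_congr fun k => and_congr_right fun hk => and_congr ⟨?_, ?_⟩ ⟨?_, ?_⟩
  · exact fun h a b _ hb hab => h a b hab (by omega)
  · exact fun h a b hab hb => h a b (by omega) (by omega) hab
  · exact fun h a b _ hb hab => h (k + a) (k + b) (by omega) (by omega) (by omega)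
  · intro h a b ha hab hb
    have hlt := h (a - k) (b - k) (by omega) (by omega) (by omega)
    rwa [Nat.add_sub_cancel' ha, Nat.add_sub_cancel' (ha.trans hab.le)] at hlt

theorem Unimodal.length_add_one_le_of_isChainCover {ι : Type*} {W : List (ι × ℕ)} {s : Finset ι}
    {t : Finset ℕ} (hW : IsChainCover W s) (ht : ∀ p ∈ W, p.2 ∈ t) {L : List ℕ}
    (hL : L.Sublist (W.map Prod.snd)) (hU : Unimodal L) : L.length + 1 ≤ s.card + t.card := by
  obtain ⟨k, hk, hdec, hinc⟩ := unimodal_iff_exists_sortedGT_take_sortedLT_drop.1 hU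
  have htake : (L.take (k + 1)).length ≤ s.card :=
    hW.length_le_card_of_sortedGT ((List.take_sublist _ _).trans hL) hdec
  have hdrop : (L.drop k).length ≤ t.card :=
    length_le_card_of_nodup hinc.nodup fun x hx =>
      List.forall_mem_map.2 ht x (hL.subset (List.mem_of_mem_drop hx))
  rw [List.length_take] at htake
  rw [List.length_drop] at hdrop
  omega

end Unimodal

section TableauRow

/-- The row `(r + k, …, r + 1, 0, 1, …, r + k)`, i.e. the row `T_{d-k}` of the distinguished tableau
of shape `Z(d,r)`. It is indexed by the number `k` of its boxes in negative columns, on which alone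
its entries depend. -/
def tableauRow (r k : ℕ) : List ℕ := (List.range' (r + 1) k).reverse ++ List.range (r + k + 1)

theorem length_tableauRow (r k : ℕ) : (tableauRow r k).length = r + 2 * k + 1 := by
  simp only [tableauRow, List.length_append, List.length_reverse, List.length_range',
    List.length_range]
  omega

theorem rowWord_eq_tableauRow (d r i : ℕ) : rowWord d r i = tableauRow r (d - i) := by
  refine List.ext_getElem (by rw [length_tableauRow]; simp [rowWord]) fun t _ _ => ?_
  simp only [rowWord, tableauRow, List.getElem_map, List.getElem_range, List.getElem_append,
    List.length_reverse, List.length_range', List.getElem_reverse, List.getElem_range']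
  split_ifs <;> omega

theorem flatMap_rowWord_eq_flatMap_tableauRow {d n : ℕ} (r : ℕ) (hn : n ≤ d + 1) :
    ((List.range n).flatMap fun k => rowWord d r (d - k)) =
      (List.range n).flatMap (tableauRow r) := by
  refine List.flatMap_congr fun k hk => ?_
  have hkd : k ≤ d := Nat.le_of_lt_succ ((List.mem_range.1 hk).trans_le hn)
  rw [rowWord_eq_tableauRow, Nat.sub_sub_self hkd]

theorem mem_tableauRow {r k x : ℕ} : x ∈ tableauRow r k ↔ x ≤ r + k := by
  simp only [tableauRow, List.mem_append, List.mem_reverse, List.mem_range'_1, List.mem_range]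
  omega

theorem unimodal_tableauRow (r k : ℕ) : Unimodal (tableauRow r k) := by
  refine unimodal_iff_exists_sortedGT_take_sortedLT_drop.2
    ⟨k, by rw [length_tableauRow]; omega, ?_, ?_⟩
  · have htake : (tableauRow r k).take (k + 1) = (0 :: List.range' (r + 1) k).reverse := by
      simp [tableauRow, List.take_append, List.take_range]
    have hpos : ∀ x ∈ List.range' (r + 1) k, 0 < x := fun x hx =>
      (Nat.succ_pos r).trans_le (List.mem_range'_1.1 hx).1
    rw [htake, List.sortedGT_reverse]
    exact (List.pairwise_cons.2 ⟨hpos, List.pairwise_lt_range' 1⟩).sortedLT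
  · have hdrop : (tableauRow r k).drop k = List.range (r + k + 1) :=
      List.drop_left' (by simp)
    rw [hdrop]
    exact List.sortedLT_range _

/-- The index of the weakly increasing subword containing the letter `x` of `tableauRow r k`: the
letters `0, …, r` of that row form the beginning of the subword `k`, and all letters `r + c + 1`
belong to the subword `c`. -/
def chainIndex (r k x : ℕ) : ℕ := if x ≤ r then k else x - (r + 1)

theorem chainIndex_le {r k x : ℕ} (hx : x ≤ r + k) : chainIndex r k x ≤ k := by
  unfold chainIndex
  split_ifs <;> omega

theorem le_of_chainIndex_eq_of_lt {r j k x y : ℕ} (hjk : j < k) (hx : x ≤ r + j)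
    (h : chainIndex r j x = chainIndex r k y) : x ≤ y := by
  unfold chainIndex at h
  split_ifs at h <;> omega

theorem pairwise_tableauRow_chainIndex (r k : ℕ) :
    (tableauRow r k).Pairwise fun x y => chainIndex r k x = chainIndex r k y → x ≤ y := by
  refine List.pairwise_append.2 ⟨?_, ?_, ?_⟩
  · refine List.pairwise_reverse.2 ((List.pairwise_lt_range' 1).imp_of_mem fun hx hy hxy heq => ?_)
    rw [List.mem_range'_1] at hx hy
    unfold chainIndex at heq
    split_ifs at heq <;> omega
  · exact (List.sortedLT_range _).pairwise.imp fun hxy _ => hxy.le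
  · intro x hx y hy heq
    rw [List.mem_reverse, List.mem_range'_1] at hx
    rw [List.mem_range] at hy
    unfold chainIndex at heq
    split_ifs at heq <;> omega

/-- The concatenation of the first `n` rows, i.e. of `T_d, …, T_{d-n+1}`, every letter being paired
with its `chainIndex`. -/
def indexedWord (r n : ℕ) : List (ℕ × ℕ) :=
  (List.range n).flatMap fun k => (tableauRow r k).map fun x => (chainIndex r k x, x)

theorem map_snd_indexedWord (r n : ℕ) :
    (indexedWord r n).map Prod.snd = (List.range n).flatMap (tableauRow r) := by
  simp [indexedWord, List.map_flatMap, Function.comp_def]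

theorem exists_of_mem_indexedWord {r n : ℕ} {p : ℕ × ℕ} (hp : p ∈ indexedWord r n) :
    ∃ k < n, p.2 ≤ r + k ∧ p.1 = chainIndex r k p.2 := by
  simp only [indexedWord, List.mem_flatMap, List.mem_range, List.mem_map, mem_tableauRow] at hp
  obtain ⟨k, hk, x, hx, rfl⟩ := hp
  exact ⟨k, hk, hx, rfl⟩

theorem snd_mem_range_of_mem_indexedWord {r n : ℕ} {p : ℕ × ℕ} (hp : p ∈ indexedWord r n) :
    p.2 ∈ Finset.range (r + n) := by
  obtain ⟨k, hk, hle, -⟩ := exists_of_mem_indexedWord hp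
  exact Finset.mem_range.2 (by omega)

theorem isChainCover_indexedWord (r n : ℕ) : IsChainCover (indexedWord r n) (Finset.range n) where
  fst_mem p hp := by
    obtain ⟨k, hk, hle, heq⟩ := exists_of_mem_indexedWord hp
    exact Finset.mem_range.2 (heq ▸ (chainIndex_le hle).trans_lt hk)
  pairwise := by
    refine List.pairwise_flatMap.2 ⟨fun k _ => ?_, ?_⟩
    · exact List.pairwise_map.2 (pairwise_tableauRow_chainIndex r k)
    · refine List.pairwise_lt_range.imp fun {j k} hjk => ?_
      simp only [List.forall_mem_map, mem_tableauRow]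
      exact fun x hx y _ => le_of_chainIndex_eq_of_lt hjk hx

theorem Unimodal.length_add_one_le_of_sublist_flatMap_tableauRow {r n : ℕ} {L : List ℕ}
    (hU : Unimodal L) (hL : L.Sublist ((List.range n).flatMap (tableauRow r))) :
    L.length + 1 ≤ r + 2 * n := by
  rw [← map_snd_indexedWord] at hL
  have h := hU.length_add_one_le_of_isChainCover (isChainCover_indexedWord r n)
    (fun _ => snd_mem_range_of_mem_indexedWord) hL
  rw [Finset.card_range, Finset.card_range] at h
  omega

end TableauRow

/-- row `i` of the distinguished tableau of shape `Z(d,r)` is a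
unimodal sequence of length `r + 2(d-i) + 1`, and every unimodal subsequence of the
concatenation `T_d T_{d-1} ⋯ T_i` has length at most `r + 2(d-i) + 1`. -/
theorem rowWord_unimodal_maximal (d r : ℕ) (hd : 1 ≤ d)
    (i : ℕ) (hi1 : 1 ≤ i) (hid : i ≤ d) :
    Unimodal (rowWord d r i) ∧ (rowWord d r i).length = r + 2 * (d - i) + 1 ∧
      ∀ L' : List ℕ,
        L'.Sublist ((List.range (d - i + 1)).flatMap fun k => rowWord d r (d - k)) →
        Unimodal L' → L'.length ≤ r + 2 * (d - i) + 1 := by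
  have hrows : d - i + 1 ≤ d + 1 := Nat.succ_le_succ (Nat.sub_le d i)
  rw [rowWord_eq_tableauRow, flatMap_rowWord_eq_flatMap_tableauRow r hrows]
  refine ⟨unimodal_tableauRow r (d - i), length_tableauRow r (d - i), fun L' hL' hU => ?_⟩
  have hlen : L'.length + 1 ≤ r + 2 * (d - i + 1) :=
    hU.length_add_one_le_of_sublist_flatMap_tableauRow hL'
  omega

end BST
end
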